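/- arXiv:1701.07857 — 5 statements merged into one kernel-verified Lean document; each statement's English description precedes it below -/
import Mathlib

section
/- Let n ≥ 2 and let ℓ_1, …, ℓ_n be positive real numbers. Fix an integer i with 1 ≤ i ≤ n−1, let R_i = (ℓ_{i+1}, …, ℓ_n), P_i = ∑_{j=i+1}^n ℓ_j, and ℓ' = P_i / exp(E(R_i)). Let L' be the sequence consisting of i copies of ℓ' followed by ℓ_{i+1}, …, ℓ_n. Then E(ℓ_1, …, ℓ_n) ≤ E(L'). -/
/-!
Write `c = P / exp (E R)` for the replacement length and `y` for the new sequence. Since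
`E R = log P - (∑ ℓ log ℓ) / P` over the tail, `log c` is the `ℓ`-weighted mean of `log ℓ` over the
tail. As `y = c` off the tail, any sequence `x` that agrees with `ℓ` on the tail satisfies
`∑ x log y = (∑ x) log c`. Hence the cross entropy of `x` relative to `y`, namely
`log (∑ y) - (∑ x log y) / ∑ x`, equals `log (∑ y) - log c` for both `x = ℓ` and `x = y`; in the
second case it is `E y`, and in the first it bounds `E ℓ` by Gibbs' inequality.
-/

open Finset

/-- Persistent entropy of the lengths `ℓ i` for `i` ranging over the finite index set `s`:
`E = -∑ i (ℓ i / S) log (ℓ i / S)` where `S = ∑ i ℓ i`. -/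
noncomputable def pentropy {ι : Type*} (s : Finset ι) (ℓ : ι → ℝ) : ℝ :=
  -∑ i ∈ s, (ℓ i / ∑ j ∈ s, ℓ j) * Real.log (ℓ i / ∑ j ∈ s, ℓ j)

/-- Indices `j` with `i ≤ j` (the "tail" `R_i` of a barcode, 0-indexed). -/
def tailSet (n i : ℕ) : Finset (Fin n) := Finset.univ.filter (fun j => i ≤ (j : ℕ))

lemma pentropy_eq {ι : Type*} (s : Finset ι) (hs : s.Nonempty) (x : ι → ℝ) (hx : ∀ j, 0 < x j) :
    pentropy s x = Real.log (∑ j ∈ s, x j) - (∑ j ∈ s, x j * Real.log (x j)) / ∑ j ∈ s, x j := by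
  have hS : 0 < ∑ j ∈ s, x j := Finset.sum_pos (fun j _ => hx j) hs
  unfold pentropy
  generalize hSd : ∑ j ∈ s, x j = S at *
  have h : ∀ j ∈ s, x j / S * Real.log (x j / S)
      = (x j * Real.log (x j)) / S - x j / S * Real.log S := by
    intro j _
    rw [Real.log_div (hx j).ne' hS.ne']
    ring
  rw [Finset.sum_congr rfl h, Finset.sum_sub_distrib, ← Finset.sum_mul, ← Finset.sum_div,
    ← Finset.sum_div, hSd, div_self hS.ne']
  ring

/-- Gibbs' inequality for the unnormalized weights `x` and `y`: entropy is at most cross entropy. -/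
lemma pentropy_le_cross {ι : Type*} (s : Finset ι) (hs : s.Nonempty) (x y : ι → ℝ)
    (hx : ∀ j, 0 < x j) (hy : ∀ j, 0 < y j) :
    pentropy s x ≤
      Real.log (∑ j ∈ s, y j) - (∑ j ∈ s, x j * Real.log (y j)) / ∑ j ∈ s, x j := by
  have hS : 0 < ∑ j ∈ s, x j := Finset.sum_pos (fun j _ => hx j) hs
  have hT : 0 < ∑ j ∈ s, y j := Finset.sum_pos (fun j _ => hy j) hs
  rw [pentropy_eq s hs x hx]
  generalize hSd : ∑ j ∈ s, x j = S at *
  generalize hTd : ∑ j ∈ s, y j = T at *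
  -- `log t ≤ t - 1` at the ratio of the normalized weights, multiplied by `x j`.
  have h : ∀ j ∈ s, x j * Real.log (y j) + x j * Real.log S - x j * Real.log T
      - x j * Real.log (x j) ≤ y j * (S / T) - x j := by
    intro j _
    have hxj := hx j
    have hyj := hy j
    have h1 := Real.log_le_sub_one_of_pos (x := (y j * S) / (T * x j)) (by positivity)
    rw [Real.log_div (by positivity) (by positivity), Real.log_mul hyj.ne' hS.ne',
      Real.log_mul hT.ne' hxj.ne'] at h1
    have h2 := mul_le_mul_of_nonneg_left h1 hxj.le
    have h3 : x j * ((y j * S) / (T * x j) - 1) = y j * (S / T) - x j := by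
      field_simp
    rw [h3] at h2
    linarith
  have h4 := Finset.sum_le_sum h
  simp only [Finset.sum_sub_distrib, Finset.sum_add_distrib, ← Finset.sum_mul, hSd, hTd] at h4
  have h5 : T * (S / T) = S := by field_simp
  rw [h5] at h4
  have h6 : ∀ a b : ℝ, a - b / S = (S * a - b) / S := by
    intro a b
    field_simp
  rw [h6, h6]
  gcongr ?_ / S
  linarith

/-- replacing the first `i` bar lengths by `i` copies of
`P_i / exp (E (R_i))` does not decrease the persistent entropy. -/
theorem entropy_le_neutralized {n : ℕ} (hn : 2 ≤ n) (ℓ : Fin n → ℝ)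
    (hpos : ∀ j, 0 < ℓ j) (i : ℕ) (hi1 : 1 ≤ i) (hi2 : i ≤ n - 1) :
    pentropy Finset.univ ℓ ≤
      pentropy Finset.univ (fun j : Fin n =>
        if (j : ℕ) < i then
          (∑ k ∈ tailSet n i, ℓ k) / Real.exp (pentropy (tailSet n i) ℓ)
        else ℓ j) := by
  have hne : (tailSet n i).Nonempty := ⟨⟨i, by omega⟩, by simp [tailSet]⟩
  have hu : (Finset.univ : Finset (Fin n)).Nonempty := ⟨⟨i, by omega⟩, by simp⟩
  have hP : 0 < ∑ k ∈ tailSet n i, ℓ k := Finset.sum_pos (fun j _ => hpos j) hne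
  generalize hc : (∑ k ∈ tailSet n i, ℓ k) / Real.exp (pentropy (tailSet n i) ℓ) = c
  have hcpos : 0 < c := by rw [← hc]; positivity
  have hT : ∑ k ∈ tailSet n i, ℓ k * Real.log (ℓ k)
      = (∑ k ∈ tailSet n i, ℓ k) * Real.log c := by
    rw [← hc, Real.log_div hP.ne' (Real.exp_pos _).ne', Real.log_exp,
      pentropy_eq _ hne ℓ hpos]
    field_simp
    ring
  set y : Fin n → ℝ := fun j => if (j : ℕ) < i then c else ℓ j with hy
  have hypos : ∀ j, 0 < y j := by
    intro j
    simp only [hy]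
    split_ifs
    exacts [hcpos, hpos j]
  have key : ∀ x : Fin n → ℝ, (∀ j : Fin n, i ≤ (j : ℕ) → x j = ℓ j) →
      ∑ j, x j * Real.log (y j) = (∑ j, x j) * Real.log c := by
    intro x hx
    rw [← sub_eq_zero, Finset.sum_mul, ← Finset.sum_sub_distrib]
    have h1 : ∀ j ∈ (Finset.univ : Finset (Fin n)), x j * Real.log (y j) - x j * Real.log c
        = if i ≤ (j : ℕ) then ℓ j * Real.log (ℓ j) - ℓ j * Real.log c else 0 := by
      intro j _
      by_cases hj : i ≤ (j : ℕ)
      · simp [hy, hj, hx j hj, not_lt.mpr hj]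
      · simp [hy, hj, not_le.mp hj]
    rw [Finset.sum_congr rfl h1, ← Finset.sum_filter]
    change ∑ j ∈ tailSet n i, _ = _
    rw [Finset.sum_sub_distrib, ← Finset.sum_mul, hT, sub_self]
  have hS : 0 < ∑ j, ℓ j := Finset.sum_pos (fun j _ => hpos j) hu
  have hS' : 0 < ∑ j, y j := Finset.sum_pos (fun j _ => hypos j) hu
  have hG := pentropy_le_cross Finset.univ hu ℓ y hpos hypos
  rw [key ℓ (fun _ _ => rfl), mul_div_cancel_left₀ _ hS.ne'] at hG
  rw [pentropy_eq _ hu y hypos, key y (fun j hj => by simp [hy, not_lt.mpr hj]),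
    mul_div_cancel_left₀ _ hS'.ne']
  exact hG
end

section
/- Let n ≥ 1, let ℓ = (ℓ_1, …, ℓ_n) and ℓ' = (ℓ'_1, …, ℓ'_n) be sequences of positive real numbers with sums S = ∑_i ℓ_i and S' = ∑_i ℓ'_i, and suppose S ≥ S'. Let δ' ∈ (0,1], set δ = S'·δ'/(4n), and assume |ℓ_i − ℓ'_i| ≤ 2δ for all i. Then for every i one has |ℓ_i/S − ℓ'_i/S'| ≤ δ'. -/
/-!
With `S = ∑ ℓ` and `S' = ∑ ℓ'`, write
`ℓ i / S - ℓ' i / S' = (ℓ i - ℓ' i) / S - (ℓ' i / S') * ((S - S') / S)`.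
Since `S ≥ S'`, the first term is at most `2 δ / S' = δ' / (2 n) ≤ δ' / 2` in absolute value.
The second is at most `(S - S') / S ≤ 2 n δ / S' = δ' / 2`, because `ℓ' i ≤ S'` and
`S - S' ≤ ∑ |ℓ k - ℓ' k| ≤ 2 n δ`.
-/

open Finset

/-- closeness of the lengths implies closeness of the probability weights. -/
theorem prob_weights_close {n : ℕ} (hn : 1 ≤ n) (ℓ ℓ' : Fin n → ℝ)
    (hpos : ∀ i, 0 < ℓ i) (hpos' : ∀ i, 0 < ℓ' i)
    (hS : ∑ i, ℓ' i ≤ ∑ i, ℓ i)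
    (δ' : ℝ) (hδ'0 : 0 < δ') (hδ'1 : δ' ≤ 1)
    (δ : ℝ) (hδ : δ = (∑ i, ℓ' i) * δ' / (4 * n))
    (hclose : ∀ i, |ℓ i - ℓ' i| ≤ 2 * δ) :
    ∀ i, |ℓ i / ∑ k, ℓ k - ℓ' i / ∑ k, ℓ' k| ≤ δ' := by
  intro i
  have hn' : (1 : ℝ) ≤ n := by exact_mod_cast hn
  have hle' : ℓ' i ≤ ∑ k, ℓ' k :=
    Finset.single_le_sum (fun k _ => (hpos' k).le) (Finset.mem_univ i)
  have hdiff : ∑ k, ℓ k - ∑ k, ℓ' k ≤ n * (2 * δ) := by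
    rw [← Finset.sum_sub_distrib]
    calc ∑ k, (ℓ k - ℓ' k) ≤ ∑ _k : Fin n, 2 * δ :=
          Finset.sum_le_sum fun k _ => (le_abs_self _).trans (hclose k)
      _ = n * (2 * δ) := by simp
  have hci := hclose i
  have hbi := hpos' i
  set S := ∑ k, ℓ k
  set S' := ∑ k, ℓ' k
  have hS'0 : 0 < S' := hbi.trans_le hle'
  have hS0 : 0 < S := hS'0.trans_le hS
  have hnδ : n * (2 * δ) = S' * δ' / 2 := by
    rw [hδ]
    field_simp
    ring
  have hδ0 : 0 ≤ 2 * δ := (abs_nonneg _).trans hci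
  have hδle : 2 * δ ≤ S' * δ' / 2 := hnδ ▸ le_mul_of_one_le_left hδ0 hn'
  have hSδ : S' * δ' ≤ S * δ' := mul_le_mul_of_nonneg_right hS hδ'0.le
  have hsplit : ℓ i / S - ℓ' i / S' = (ℓ i - ℓ' i) / S - ℓ' i / S' * ((S - S') / S) := by
    field_simp
    ring
  have h1 : |(ℓ i - ℓ' i) / S| ≤ δ' / 2 := by
    rw [abs_div, abs_of_pos hS0, div_le_iff₀ hS0]
    linarith
  have hfrac : (S - S') / S ≤ δ' / 2 := by
    rw [div_le_iff₀ hS0]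
    linarith
  have hfrac0 : 0 ≤ (S - S') / S := div_nonneg (sub_nonneg.2 hS) hS0.le
  have h2 : |ℓ' i / S' * ((S - S') / S)| ≤ δ' / 2 := by
    rw [abs_of_nonneg (mul_nonneg (div_pos hbi hS'0).le hfrac0)]
    exact (mul_le_of_le_one_left hfrac0 ((div_le_one hS'0).2 hle')).trans hfrac
  rw [hsplit]
  calc _ ≤ |(ℓ i - ℓ' i) / S| + |ℓ' i / S' * ((S - S') / S)| := abs_sub _ _
    _ ≤ δ' := by linarith
end

section
/- Let n ≥ 2 and 0 < r ≤ T. Let L = (ℓ_1, …, ℓ_n) be a nonincreasing sequence of positive reals with ℓ_1 = T and ℓ_n = r. Set α = r/T and b = T·α^{α/(1+α)} = T^{T/(T+r)}·r^{r/(T+r)}, and let M' = (T, b, …, b, r) with n−2 copies of b. Then E(L) ≤ E(M'). -/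
/-!
Write `m = (T, b, …, b, r)`, and let `S`, `S'` be the sums of `ℓ` and `m`. Gibbs' inequality
(`pentropy_le_cross`) bounds `E(ℓ)` by the cross entropy `-∑ (ℓ i / S) log (m i / S')`.
The value of `b` is chosen so that `(T + r) log b = T log T + r log r`; hence `∑ f i log (m i)`
equals `(∑ f i) log b` for every `f` with first entry `T` and last entry `r`
(`cross_eq`). The cross entropy against `m` is therefore `log S' - log b` for all such `f`; since
`m` is itself such an `f`, this common value is `E(m)`.
-/

open Finset

/-- Gibbs' inequality, for unnormalised positive weights. -/
lemma pentropy_le_cross_s9 {n : ℕ} (hn : 0 < n) (f m : Fin n → ℝ) (hf : ∀ j, 0 < f j)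
    (hm : ∀ j, 0 < m j) :
    pentropy univ f ≤ -∑ i, (f i / ∑ j, f j) * Real.log (m i / ∑ j, m j) := by
  have hne : (univ : Finset (Fin n)).Nonempty := ⟨⟨0, hn⟩, mem_univ _⟩
  have hF : 0 < ∑ j, f j := sum_pos (fun j _ => hf j) hne
  have hM : 0 < ∑ j, m j := sum_pos (fun j _ => hm j) hne
  unfold pentropy
  set F := ∑ j, f j with hFdef
  set M := ∑ j, m j with hMdef
  have hterm : ∀ i ∈ (univ : Finset (Fin n)),
      f i / F * Real.log (m i / M) - f i / F * Real.log (f i / F) ≤ m i / M - f i / F := by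
    intro i _
    have hp : 0 < f i / F := div_pos (hf i) hF
    have hq : 0 < m i / M := div_pos (hm i) hM
    have h := Real.log_le_sub_one_of_pos (div_pos hq hp)
    rw [Real.log_div hq.ne' hp.ne'] at h
    have h2 := mul_le_mul_of_nonneg_left h hp.le
    have h3 : f i / F * (m i / M / (f i / F) - 1) = m i / M - f i / F := by
      rw [mul_sub, mul_div_cancel₀ _ hp.ne', mul_one]
    linarith
  have h := sum_le_sum hterm
  rw [sum_sub_distrib, sum_sub_distrib, ← sum_div, ← sum_div, ← hFdef, ← hMdef,
    div_self hF.ne', div_self hM.ne'] at h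
  linarith

/-- The cross entropy of `f` against `(T, b, …, b, r)` is the same for every positive `f` with
first entry `T` and last entry `r`. The first and last indices are the variables `i₀`, `i₁`. -/
lemma cross_eq {n : ℕ} (hn : 2 ≤ n) (i₀ i₁ : Fin n) (hi₀ : (i₀ : ℕ) = 0)
    (hi₁ : (i₁ : ℕ) = n - 1) (r T b : ℝ)
    (hlog : (T + r) * Real.log b = T * Real.log T + r * Real.log r)
    (f m : Fin n → ℝ) (hf : ∀ j, 0 < f j) (hm : ∀ j, 0 < m j)
    (hfirst : f i₀ = T) (hlast : f i₁ = r)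
    (hmdef : ∀ j, m j = if (j : ℕ) = 0 then T else if (j : ℕ) = n - 1 then r else b) :
    -∑ i, (f i / ∑ j, f j) * Real.log (m i / ∑ j, m j) = Real.log (∑ j, m j) - Real.log b := by
  have hne : (univ : Finset (Fin n)).Nonempty := ⟨i₀, mem_univ _⟩
  have hF : 0 < ∑ j, f j := sum_pos (fun j _ => hf j) hne
  have hM : 0 < ∑ j, m j := sum_pos (fun j _ => hm j) hne
  have hn1 : n - 1 ≠ 0 := by omega
  have hz : ∑ i, f i * (Real.log (m i) - Real.log b) = 0 := by
    rw [Fintype.sum_eq_add i₀ i₁]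
    · rw [hfirst, hlast, hmdef, hmdef, hi₀, hi₁]
      simp only [if_true, if_neg hn1]
      linarith
    · intro h
      exact hn1 (by rw [← hi₁, ← h, hi₀])
    · rintro x ⟨h1, h2⟩
      have h1' : (x : ℕ) ≠ 0 := fun h => h1 (Fin.ext (h.trans hi₀.symm))
      have h2' : (x : ℕ) ≠ n - 1 := fun h => h2 (Fin.ext (h.trans hi₁.symm))
      rw [hmdef, if_neg h1', if_neg h2', sub_self, mul_zero]
  set F := ∑ j, f j with hFdef
  set M := ∑ j, m j with hMdef
  have hterm : ∀ i, f i / F * Real.log (m i / M)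
      = f i * (Real.log (m i) - Real.log b) / F + f i / F * (Real.log b - Real.log M) := by
    intro i
    rw [Real.log_div (hm i).ne' hM.ne']
    ring
  rw [sum_congr rfl (fun i _ => hterm i), sum_add_distrib, ← sum_div, hz, ← sum_mul, ← sum_div,
    ← hFdef, div_self hF.ne']
  ring

/-- among barcodes with `n` bars, maximum length `T` and minimum length `r`,
the maximum persistent entropy is attained by `M' = (T, b, …, b, r)` with
`b = T^{T/(T+r)} r^{r/(T+r)}`. -/
theorem max_entropy_barcode {n : ℕ} (hn : 2 ≤ n) (r T : ℝ) (hr : 0 < r) (hrT : r ≤ T)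
    (ℓ : Fin n → ℝ) (hpos : ∀ j, 0 < ℓ j)
    (hmono : ∀ i j : Fin n, i ≤ j → ℓ j ≤ ℓ i)
    (hfirst : ℓ ⟨0, by omega⟩ = T) (hlast : ℓ ⟨n - 1, by omega⟩ = r)
    (b : ℝ) (hb : b = T ^ (T / (T + r)) * r ^ (r / (T + r))) :
    pentropy Finset.univ ℓ ≤
      pentropy Finset.univ (fun j : Fin n =>
        if (j : ℕ) = 0 then T else if (j : ℕ) = n - 1 then r else b) := by
  have hT : 0 < T := hr.trans_le hrT
  have hb0 : 0 < b := by rw [hb]; positivity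
  have hlog : (T + r) * Real.log b = T * Real.log T + r * Real.log r := by
    rw [hb, Real.log_mul (by positivity) (by positivity), Real.log_rpow hT, Real.log_rpow hr]
    field_simp
  set m : Fin n → ℝ := fun j => if (j : ℕ) = 0 then T else if (j : ℕ) = n - 1 then r else b
    with hmdef
  have hm : ∀ j, 0 < m j := by
    intro j
    simp only [hmdef]
    split_ifs <;> assumption
  have hn1 : n - 1 ≠ 0 := by omega
  have h1 := cross_eq hn _ _ rfl rfl r T b hlog ℓ m hpos hm hfirst hlast (fun _ => rfl)
  have h2 := cross_eq hn ⟨0, by omega⟩ ⟨n - 1, by omega⟩ rfl rfl r T b hlog m m hm hm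
    (by simp [hmdef]) (by simp [hmdef, hn1])
    (fun _ => rfl)
  calc pentropy univ ℓ ≤ _ := pentropy_le_cross_s9 (by omega) ℓ m hpos hm
    _ = _ := h1.trans h2.symm
end

section
/- Let d ≥ 1, let r ≥ 0, and let S be a nonempty finite set of points in Euclidean space ℝ^d such that dist(x, y) ≤ 2r for all x, y ∈ S. Then there exists a point c ∈ ℝ^d such that dist(c, x) ≤ √2·r for every x ∈ S; that is, the closed balls of radius √2·r centered at the points of S have a common point. (This is the inclusion VR_V(r) ⊆ Čech_V(√2·r).) -/
open Finset

/-!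
The centre is found by maximizing a variance. Lift each `x ∈ S` to the point `(x, ‖x‖²)` of the
paraboloid in `E × ℝ`. A point `(c, s)` of the convex hull `K` of the lifted points records the
barycentre `c` and second moment `s` of a probability measure on `S`, and `s - ‖c‖²` is its
variance. The variance is half the mean squared distance of two independent samples, hence at most
`(2r)² / 2 = 2r²` (`variance_le_of_mem_convexHull`).

Let `(c, s)` maximize the variance on the compact set `K`. Moving mass `t` to a point `x ∈ S` gives
variance `(1 - t) (s - ‖c‖²) + t (1 - t) ‖x - c‖²`, which is at most `s - ‖c‖²`. Dividing by `t` and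
letting `t → 0` yields `‖x - c‖² ≤ s - ‖c‖² ≤ 2r²`.
-/

section

variable {E : Type*} [NormedAddCommGroup E] [InnerProductSpace ℝ E]

/-- For points `p`, `q` of the paraboloid `p.2 - 2 ⟪p.1, q.1⟫ + q.2` is the squared distance of
their projections to `E`; being affine in `p` and in `q`, it obeys the same bound on the convex
hull. The diagonal `p = q` gives the bound on the variance. -/
lemma variance_le_of_mem_convexHull {T : Set E} {D : ℝ} (hT : ∀ x ∈ T, ∀ y ∈ T, dist x y ≤ D)
    {p : E × ℝ} (hp : p ∈ convexHull ℝ ((fun x : E => (x, ‖x‖ ^ 2)) '' T)) :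
    2 * (p.2 - ‖p.1‖ ^ 2) ≤ D ^ 2 := by
  have convex_halfspace (q : E × ℝ) :
      Convex ℝ {p : E × ℝ | p.2 - 2 * inner ℝ p.1 q.1 + q.2 ≤ D ^ 2} := by
    intro u hu v hv a b ha hb hab
    simp only [Set.mem_ofPred_eq, Prod.snd_add, Prod.smul_snd, Prod.fst_add, Prod.smul_fst,
      smul_eq_mul, inner_add_left, real_inner_smul_left] at hu hv ⊢
    obtain rfl : b = 1 - a := by linarith
    nlinarith [mul_le_mul_of_nonneg_left hu ha, mul_le_mul_of_nonneg_left hv hb]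
  have bound_lifted : ∀ y ∈ T, ∀ q ∈ convexHull ℝ ((fun x : E => (x, ‖x‖ ^ 2)) '' T),
      q.2 - 2 * inner ℝ q.1 y + ‖y‖ ^ 2 ≤ D ^ 2 := by
    intro y hy
    refine convexHull_min ?_ (convex_halfspace (y, ‖y‖ ^ 2))
    rintro _ ⟨x, hx, rfl⟩
    have h := hT x hx y hy
    rw [dist_eq_norm] at h
    have h2 := pow_le_pow_left₀ (norm_nonneg _) h 2
    rw [norm_sub_sq_real] at h2
    exact h2
  have bound_hull := convexHull_min (t := {q : E × ℝ | q.2 - 2 * inner ℝ q.1 p.1 + p.2 ≤ D ^ 2})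
    (by
      rintro _ ⟨y, hy, rfl⟩
      have h := bound_lifted y hy p hp
      rw [real_inner_comm] at h
      simp only [Set.mem_ofPred_eq]
      linarith) (convex_halfspace p) hp
  simp only [Set.mem_ofPred_eq, real_inner_self_eq_norm_sq] at bound_hull
  linarith

/-- The variance of the mixture of a measure with barycentre `c` and second moment `s` and the
point mass at `x`. -/
lemma variance_mixture (c x : E) (s t : ℝ) :
    ((1 - t) * s + t * ‖x‖ ^ 2) - ‖(1 - t) • c + t • x‖ ^ 2 =
      (1 - t) * (s - ‖c‖ ^ 2) + t * (1 - t) * ‖c - x‖ ^ 2 := by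
  rw [norm_add_sq_real, norm_sub_sq_real, norm_smul, norm_smul, mul_pow, mul_pow,
    Real.norm_eq_abs, Real.norm_eq_abs, sq_abs, sq_abs, real_inner_smul_left,
    real_inner_smul_right]
  ring

end

/-- a finite set in `ℝ^d` with pairwise distances at most `2r` is contained
in a closed ball of radius `√2 · r`; this is the inclusion `VR_V(r) ⊆ Čech_V(√2 r)`. -/
theorem rips_subset_cech {d : ℕ} (hd : 1 ≤ d) (r : ℝ) (hr : 0 ≤ r)
    (S : Finset (EuclideanSpace ℝ (Fin d))) (hS : S.Nonempty)
    (hdiam : ∀ x ∈ S, ∀ y ∈ S, dist x y ≤ 2 * r) :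
    ∃ c : EuclideanSpace ℝ (Fin d), ∀ x ∈ S, dist c x ≤ Real.sqrt 2 * r := by
  set L := (fun x : EuclideanSpace ℝ (Fin d) => (x, ‖x‖ ^ 2)) '' (S : Set (EuclideanSpace ℝ (Fin d))) with hL
  have hcompact : IsCompact (convexHull ℝ L) :=
    (S.finite_toSet.image _).isCompact_convexHull ℝ
  have hne : (convexHull ℝ L).Nonempty := (hS.to_set.image _).convexHull
  obtain ⟨⟨c, s⟩, hcs, hmax⟩ := hcompact.exists_isMaxOn hne
    (f := fun p => p.2 - ‖p.1‖ ^ 2) (by fun_prop)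
  have hvar := variance_le_of_mem_convexHull (T := (S : Set (EuclideanSpace ℝ (Fin d)))) hdiam hcs
  refine ⟨c, fun x hx => ?_⟩
  have hstep : ∀ t : ℝ, 0 < t → t < 1 → (1 - t) * ‖c - x‖ ^ 2 ≤ s - ‖c‖ ^ 2 := by
    intro t ht0 ht1
    have hxL : (x, ‖x‖ ^ 2) ∈ convexHull ℝ L := subset_convexHull ℝ L ⟨x, hx, rfl⟩
    have hmem := convex_convexHull ℝ L hcs hxL (sub_nonneg.2 ht1.le) ht0.le (by ring)
    have h := hmax hmem
    simp only [Set.mem_ofPred_eq, Prod.snd_add, Prod.smul_snd, Prod.fst_add, Prod.smul_fst,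
      smul_eq_mul, variance_mixture] at h
    refine le_of_mul_le_mul_left ?_ ht0
    linarith
  have hlim : ‖c - x‖ ^ 2 ≤ s - ‖c‖ ^ 2 := by
    by_contra! hlt
    -- At `t = (A - B) / (2 (A + 1))`, with `A = ‖c - x‖²` and `B = s - ‖c‖²`, `hstep` fails:
    -- there `t * A < A - B`.
    have hA : 0 ≤ ‖c - x‖ ^ 2 := by positivity
    have hB : 0 ≤ s - ‖c‖ ^ 2 :=
      le_trans (by positivity) (hstep (1 / 2) (by norm_num) (by norm_num))
    generalize ‖c - x‖ ^ 2 = A at *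
    generalize s - ‖c‖ ^ 2 = B at *
    have ht : (A - B) / (2 * (A + 1)) * (2 * (A + 1)) = A - B :=
      div_mul_cancel₀ _ (by positivity)
    have ht0 : 0 < (A - B) / (2 * (A + 1)) := div_pos (by linarith) (by positivity)
    have h := hstep _ ht0 (by rw [div_lt_one (by positivity)]; linarith)
    nlinarith
  rw [dist_eq_norm]
  refine (sq_le_sq₀ (norm_nonneg _) (by positivity)).1 ?_
  rw [mul_pow, Real.sq_sqrt (by norm_num)]
  simp only at hvar
  linarith
end

section
/- Let n ≥ 2 and let L = (ℓ_1, …, ℓ_n) be positive reals. For 0 ≤ i ≤ n−1 let R_i = (ℓ_{i+1}, …, ℓ_n), P_i = ∑_{j=i+1}^n ℓ_j, and let L'_i be the sequence consisting of i copies of P_i/exp(E(R_i)) followed by ℓ_{i+1}, …, ℓ_n (so L'_0 = L). Then for all 0 ≤ i ≤ j ≤ n−1 one has E(L'_i) ≤ E(L'_j). -/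
/-!
Write `N_i = exp (E(R_i))`. The copied length `a = P_i / N_i` satisfies `log a = log P_i - E(R_i)`,
which is exactly the weighted mean of `log ℓ` over the tail. Hence every block of `L'_i` has mean
logarithm `log a`, and with `S = i * a + P_i` the total of `L'_i` this gives
`E(L'_i) = log (S / a) = log (i + N_i)` (`pentropy_neutralized`).

Monotonicity thus reduces to `N_i ≤ 1 + N_{i+1}`: adding one bar raises the exponential of the
entropy by at most one (`exp_pentropy_insert_le`). For a bar `x` added to bars of total
`P` with `N = exp E`, this is Gibbs' inequality, comparing the weights `(x / (x + P), P / (x + P))`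
with `(1 / (1 + N), N / (1 + N))`.
-/

open Finset

lemma sum_mul_pentropy {ι : Type*} (s : Finset ι) (ℓ : ι → ℝ) (hpos : ∀ j ∈ s, 0 < ℓ j)
    (hs : 0 < ∑ j ∈ s, ℓ j) :
    (∑ j ∈ s, ℓ j) * pentropy s ℓ =
      (∑ j ∈ s, ℓ j) * Real.log (∑ j ∈ s, ℓ j) - ∑ j ∈ s, ℓ j * Real.log (ℓ j) := by
  unfold pentropy
  generalize hS : ∑ j ∈ s, ℓ j = S at *
  have h : ∀ j ∈ s, S * (ℓ j / S * Real.log (ℓ j / S))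
      = ℓ j * Real.log (ℓ j) - ℓ j * Real.log S := by
    intro j hj
    rw [Real.log_div (hpos j hj).ne' hs.ne']
    field_simp
  rw [mul_neg, Finset.mul_sum, Finset.sum_congr rfl h, Finset.sum_sub_distrib, ← Finset.sum_mul, hS]
  ring

lemma exp_pentropy_insert_le {ι : Type*} [DecidableEq ι] (s : Finset ι) (k : ι) (hk : k ∉ s)
    (ℓ : ι → ℝ) (hpos : ∀ j, 0 < ℓ j) (hs : s.Nonempty) :
    Real.exp (pentropy (insert k s) ℓ) ≤ 1 + Real.exp (pentropy s ℓ) := by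
  have hP : 0 < ∑ j ∈ s, ℓ j := Finset.sum_pos (fun j _ => hpos j) hs
  have hx := hpos k
  have hT : 0 < ∑ j ∈ insert k s, ℓ j := by
    rw [Finset.sum_insert hk]; linarith
  have h1 := sum_mul_pentropy s ℓ (fun j _ => hpos j) hP
  have h2 := sum_mul_pentropy (insert k s) ℓ (fun j _ => hpos j) hT
  rw [Finset.sum_insert hk, Finset.sum_insert hk] at h2
  generalize pentropy (insert k s) ℓ = H' at *
  generalize pentropy s ℓ = H at *
  generalize ∑ j ∈ s, ℓ j * Real.log (ℓ j) = F at *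
  generalize ∑ j ∈ s, ℓ j = P at *
  generalize ℓ k = x at *
  have hN : 0 < Real.exp H := Real.exp_pos H
  have hlN : Real.log (Real.exp H) = H := Real.log_exp H
  generalize Real.exp H = N at *
  have hTx : 0 < x + P := by linarith
  have hN1 : 0 < 1 + N := by linarith
  rw [← Real.le_log_iff_exp_le hN1]
  -- Gibbs' inequality, from `log y ≤ y - 1` applied to the two likelihood ratios.
  have g1 := mul_le_mul_of_nonneg_left
    (Real.log_le_sub_one_of_pos (x := (x + P) / (x * (1 + N))) (by positivity)) hx.le
  have g2 := mul_le_mul_of_nonneg_left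
    (Real.log_le_sub_one_of_pos (x := (x + P) * N / (P * (1 + N))) (by positivity)) hP.le
  rw [Real.log_div hTx.ne' (by positivity), Real.log_mul hx.ne' hN1.ne'] at g1
  rw [Real.log_div (by positivity) (by positivity), Real.log_mul hTx.ne' hN.ne',
    Real.log_mul hP.ne' hN1.ne', hlN] at g2
  have e : x * ((x + P) / (x * (1 + N)) - 1) + P * ((x + P) * N / (P * (1 + N)) - 1) = 0 := by
    field_simp
    ring
  have : (x + P) * H' ≤ (x + P) * Real.log (1 + N) := by linarith
  exact le_of_mul_le_mul_left this hTx

lemma tailSet_nonempty {n i : ℕ} (hi : i < n) : (tailSet n i).Nonempty :=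
  ⟨⟨i, hi⟩, by simp [tailSet]⟩

lemma tailSet_eq_insert {n i : ℕ} (hi : i < n) :
    tailSet n i = insert ⟨i, hi⟩ (tailSet n (i + 1)) := by
  ext j
  simp only [tailSet, Finset.mem_filter, Finset.mem_univ, true_and, Finset.mem_insert, Fin.ext_iff]
  omega

lemma sum_ite_lt {n i : ℕ} (hi : i < n) (c : ℝ) (f : Fin n → ℝ) :
    ∑ k : Fin n, (if (k : ℕ) < i then c else f k) = i * c + ∑ k ∈ tailSet n i, f k := by
  rw [Finset.sum_ite, Finset.sum_const, nsmul_eq_mul]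
  congr 2
  · rw [Fin.card_filter_val_lt, min_eq_right hi.le]
  · simp only [tailSet, not_lt]

lemma pentropy_neutralized {n i : ℕ} (hi : i < n) (ℓ : Fin n → ℝ) (hpos : ∀ j, 0 < ℓ j) :
    pentropy Finset.univ (fun k : Fin n =>
        if (k : ℕ) < i then
          (∑ t ∈ tailSet n i, ℓ t) / Real.exp (pentropy (tailSet n i) ℓ)
        else ℓ k) = Real.log (i + Real.exp (pentropy (tailSet n i) ℓ)) := by
  have hP : 0 < ∑ j ∈ tailSet n i, ℓ j := Finset.sum_pos (fun j _ => hpos j) (tailSet_nonempty hi)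
  have h1 := sum_mul_pentropy (tailSet n i) ℓ (fun j _ => hpos j) hP
  set P := ∑ j ∈ tailSet n i, ℓ j with hPdef
  set H := pentropy (tailSet n i) ℓ
  have hN : 0 < Real.exp H := Real.exp_pos H
  have ha : 0 < P / Real.exp H := by positivity
  have hla : Real.log (P / Real.exp H) = Real.log P - H := by
    rw [Real.log_div hP.ne' hN.ne', Real.log_exp]
  have hSeq := sum_ite_lt hi (P / Real.exp H) ℓ
  rw [← hPdef] at hSeq
  have hS : 0 < (i : ℝ) * (P / Real.exp H) + P := by positivity
  have h2 := sum_mul_pentropy Finset.univ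
    (fun k : Fin n => if (k : ℕ) < i then P / Real.exp H else ℓ k)
    (fun k _ => by split_ifs; exacts [ha, hpos k]) (by rw [hSeq]; exact hS)
  have hF : ∑ k : Fin n, (if (k : ℕ) < i then P / Real.exp H else ℓ k) *
      Real.log (if (k : ℕ) < i then P / Real.exp H else ℓ k) =
      ((i : ℝ) * (P / Real.exp H) + P) * Real.log (P / Real.exp H) := by
    have := sum_ite_lt hi (P / Real.exp H * Real.log (P / Real.exp H)) (fun k => ℓ k * Real.log (ℓ k))
    rw [← Finset.sum_congr rfl (fun k _ => ?_), this]
    · rw [hla]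
      linear_combination h1
    · split_ifs <;> rfl
  rw [hSeq, hF, ← mul_sub] at h2
  rw [mul_left_cancel₀ hS.ne' h2, ← Real.log_div hS.ne' ha.ne']
  congr 1
  field_simp

/-- the persistent entropies of the successively neutralized barcodes
`L'_i` are nondecreasing in `i`. -/
theorem neutralized_entropy_mono {n : ℕ} (hn : 2 ≤ n) (ℓ : Fin n → ℝ)
    (hpos : ∀ j, 0 < ℓ j) :
    ∀ i j : ℕ, i ≤ j → j ≤ n - 1 →
      pentropy Finset.univ (fun k : Fin n =>
        if (k : ℕ) < i then
          (∑ t ∈ tailSet n i, ℓ t) / Real.exp (pentropy (tailSet n i) ℓ)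
        else ℓ k) ≤
      pentropy Finset.univ (fun k : Fin n =>
        if (k : ℕ) < j then
          (∑ t ∈ tailSet n j, ℓ t) / Real.exp (pentropy (tailSet n j) ℓ)
        else ℓ k) := by
  intro i j hij hj
  rw [pentropy_neutralized (by omega) ℓ hpos, pentropy_neutralized (by omega) ℓ hpos]
  apply Real.log_le_log (by positivity)
  induction j, hij using Nat.le_induction with
  | base => exact le_rfl
  | succ m him ih =>
    refine (ih (by omega)).trans ?_
    have h := exp_pentropy_insert_le (tailSet n (m + 1)) ⟨m, by omega⟩ (by simp [tailSet]) ℓ hpos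
      (tailSet_nonempty (by omega))
    rw [← tailSet_eq_insert (by omega)] at h
    push_cast
    linarith
end
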